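/- arXiv:2102.13049 — 2 statements merged into one kernel-verified Lean document; each statement's English description precedes it below -/
import Mathlib

section
/- Let (X,ρ) be a metric space, let k, l ≥ 2 be integers, and suppose {y_s}_{s ∈ l^{<ω}} is a strongly (k,l)-regular set in X. Then the set Y = {y_s : s ∈ l^{<ω}} satisfies dim_L Y ≥ (log l)/(k·log 2); in particular dim_ML X ≥ (log l)/(k·log 2). -/
open Metric ENNReal

variable {X : Type*} [MetricSpace X]

/-- `E` can be covered by `n` sets of diameter at most `r`. -/
def IsCoverBy (r : ℝ) (E : Set X) (n : ℕ) : Prop :=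
  ∃ f : Fin n → Set X, (∀ i, EMetric.diam (f i) ≤ ENNReal.ofReal r) ∧ E ⊆ ⋃ i, f i

/-- The lower (minimal) dimension of `A ⊆ X`, with the metric induced from `X`,
taking values in `[0, ∞]`.  It is the supremum of those `α ≥ 0` for which there is a
constant `C > 0` such that every ball `B(x, R) ∩ A` (with `x ∈ A` and `0 < r < R ≤ diam A`)
needs at least `C (R/r)^α` sets of diameter at most `r` to be covered. -/
noncomputable def lowerDim (A : Set X) : ℝ≥0∞ :=
  sSup (ENNReal.ofReal '' {α : ℝ | 0 ≤ α ∧ ∃ C : ℝ, 0 < C ∧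
    ∀ r R : ℝ, 0 < r → r < R → ENNReal.ofReal R ≤ EMetric.diam A →
      ∀ x ∈ A, ∀ n : ℕ,
        IsCoverBy r (Metric.closedBall x R ∩ A) n → C * (R / r) ^ α ≤ (n : ℝ)})

/-- The modified lower dimension of `A ⊆ X`: the supremum of the lower dimensions of all
subsets of `A`. -/
noncomputable def modLowerDim (A : Set X) : ℝ≥0∞ :=
  ⨆ (E : Set X) (_ : E ⊆ A), lowerDim E

/-- A `(k,l)`-regular set in `X`: a family of points indexed by finite sequences with entries
in `{0, …, l-1}` such that (i) consecutive points are `2^{-kn-1}`-close and (ii) points with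
distinct indices of the same length `n` are `2^{-kn+2}`-separated. -/
def IsRegularSet (k l : ℕ) (y : List (Fin l) → X) : Prop :=
  (∀ (s : List (Fin l)) (c : Fin l),
      dist (y s) (y (s ++ [c])) ≤ (2 : ℝ) ^ (-(k * s.length : ℤ) - 1)) ∧
  (∀ s t : List (Fin l), s.length = t.length → s ≠ t →
      (2 : ℝ) ^ (-(k * s.length : ℤ) + 2) ≤ dist (y s) (y t))

/-- A strongly `(k,l)`-regular set: a `(k,l)`-regular set that additionally satisfies
`y_{s⌢0} = y_s` for all `s`. -/
def IsStronglyRegularSet (k l : ℕ) (y : List (Fin l) → X) : Prop :=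
  IsRegularSet k l y ∧
  ∀ (s : List (Fin l)) (c : Fin l), (c : ℕ) = 0 → y (s ++ [c]) = y s

/-!
All points `y_u` with `u` extending `s` lie within `2^{-k|s|}` of `y_s`. Strong regularity makes
every point of `Y` lie within `2^{-kN}` of some `y_t` with `|t| = N`, for each `N`: truncate the
index of the point, or pad it with zeros. So a ball of radius about `2^{-kN}` contains the `l^j`
points `y_{t⌢w}` with `|w| = j`. As these are `2^{-k(N+j)+2}`-separated, no two of them share a
covering set of diameter about `2^{-k(N+j)}`: shrinking the scale by `2^{kj}` forces about `l^j`
sets, which is growth with exponent `log l / log (2^k)`.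
-/

section Covers

variable {E : Set X} {r : ℝ} {n : ℕ}

theorem IsCoverBy.mono {r' : ℝ} (h : IsCoverBy r E n) (hr : r ≤ r') : IsCoverBy r' E n :=
  let ⟨f, hf, hE⟩ := h
  ⟨f, fun i => (hf i).trans (ENNReal.ofReal_le_ofReal hr), hE⟩

theorem IsCoverBy.card_le_of_pairwise_lt_edist {ι : Type*} [Fintype ι] {x : ι → X}
    (h : IsCoverBy r E n) (hx : ∀ i, x i ∈ E)
    (hsep : Pairwise fun i j => ENNReal.ofReal r < edist (x i) (x j)) :
    Fintype.card ι ≤ n := by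
  obtain ⟨f, hf, hE⟩ := h
  choose g hg using fun i => Set.mem_iUnion.1 (hE (hx i))
  have g_injective : Function.Injective g := by
    intro i j hij
    by_contra hne
    have hle : edist (x i) (x j) ≤ ENNReal.ofReal r :=
      (Metric.edist_le_ediam_of_mem (hg i) (hij ▸ hg j)).trans (hf (g i))
    exact (hsep hne).not_ge hle
  simpa using Fintype.card_le_of_injective g g_injective

theorem IsCoverBy.pos (h : IsCoverBy r E n) (hE : E.Nonempty) : 0 < n := by
  obtain ⟨x, hx⟩ := hE
  exact h.card_le_of_pairwise_lt_edist (x := fun _ : Unit => x) (fun _ => hx)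
    Subsingleton.pairwise

end Covers

section LowerDimension

theorem lowerDim_le_modLowerDim {E A : Set X} (h : E ⊆ A) : lowerDim E ≤ modLowerDim A :=
  le_iSup₂_of_le E h le_rfl

theorem ofReal_logb_le_lowerDim {A : Set X} {b L c : ℝ} (hb : 1 < b) (hL : 1 ≤ L) (hc : 0 < c)
    (hcover : ∀ R : ℝ, 0 < R → ENNReal.ofReal R ≤ ediam A → ∀ x ∈ A, ∀ j n : ℕ,
      IsCoverBy (R / b ^ j) (closedBall x R ∩ A) n → L ^ j ≤ c * n) :
    ENNReal.ofReal (Real.logb b L) ≤ lowerDim A := by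
  have hL₀ : 0 < L := one_pos.trans_le hL
  have hα : 0 ≤ Real.logb b L := Real.logb_nonneg hb hL
  refine le_sSup ⟨_, ⟨hα, (L * c)⁻¹, by positivity, ?_⟩, rfl⟩
  intro r R hr hrR hdiam x hx n hn
  have hR : 0 < R := hr.trans hrR
  obtain ⟨j, hj, hj'⟩ := exists_nat_pow_near ((one_le_div hr).2 hrR.le) hb
  have hrj : r ≤ R / b ^ j := (le_div_comm₀ (by positivity) hr).1 hj
  rw [inv_mul_le_iff₀ (by positivity)]
  calc (R / r) ^ Real.logb b L
      ≤ (b ^ (j + 1)) ^ Real.logb b L := by gcongr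
    _ = L ^ (j + 1) := by
      rw [← Real.rpow_pow_comm (by positivity), Real.rpow_logb (by positivity) hb.ne' hL₀]
    _ ≤ L * (c * n) := by
      rw [pow_succ']
      gcongr
      exact hcover R hR hdiam x hx j n (hn.mono hrj)
    _ = L * c * n := (mul_assoc ..).symm

end LowerDimension

section RegularSets

theorem dist_append_le_of_geometric {α Y : Type*} [PseudoMetricSpace Y] {y : List α → Y}
    {C q : ℝ} (hC : 0 ≤ C) (hq₀ : 0 ≤ q) (hq₁ : q < 1)
    (hy : ∀ s c, dist (y s) (y (s ++ [c])) ≤ C * q ^ s.length) (s u : List α) :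
    dist (y s) (y (s ++ u)) ≤ C * q ^ s.length / (1 - q) := by
  have hq : 0 < 1 - q := sub_pos.2 hq₁
  induction u generalizing s with
  | nil => simp only [List.append_nil, dist_self]; positivity
  | cons c u ih =>
    calc dist (y s) (y (s ++ c :: u))
        ≤ dist (y s) (y (s ++ [c])) + dist (y (s ++ [c])) (y (s ++ [c] ++ u)) := by
          simpa using dist_triangle (y s) (y (s ++ [c])) (y (s ++ [c] ++ u))
      _ ≤ C * q ^ s.length + C * q ^ (s.length + 1) / (1 - q) :=
          add_le_add (hy s c) (by simpa using ih (s ++ [c]))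
      _ = C * q ^ s.length / (1 - q) := by field_simp; ring

theorem zpow_neg_natCast_mul_natCast {G : Type*} [DivisionMonoid G] (a : G) (k n : ℕ) :
    a ^ (-(k * n : ℤ)) = (a ^ k)⁻¹ ^ n := by
  rw [zpow_neg, inv_pow, ← pow_mul, ← zpow_natCast, Nat.cast_mul]

variable {k l : ℕ} {y : List (Fin l) → X}

theorem IsRegularSet.dist_append_singleton_le (hy : IsRegularSet k l y) (s : List (Fin l))
    (c : Fin l) : dist (y s) (y (s ++ [c])) ≤ 1 / 2 * ((2 : ℝ) ^ k)⁻¹ ^ s.length := by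
  refine (hy.1 s c).trans_eq ?_
  rw [zpow_sub₀ two_ne_zero, zpow_neg_natCast_mul_natCast, zpow_one]
  ring

theorem IsRegularSet.le_dist_of_length_eq (hy : IsRegularSet k l y) {s t : List (Fin l)}
    (hst : s.length = t.length) (hne : s ≠ t) :
    4 * ((2 : ℝ) ^ k)⁻¹ ^ s.length ≤ dist (y s) (y t) := by
  refine Eq.trans_le ?_ (hy.2 s t hst hne)
  rw [zpow_add₀ two_ne_zero, zpow_neg_natCast_mul_natCast]
  norm_num [mul_comm]

theorem IsRegularSet.dist_append_le (hy : IsRegularSet k l y) (hk : k ≠ 0) (s u : List (Fin l)) :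
    dist (y s) (y (s ++ u)) ≤ ((2 : ℝ) ^ k)⁻¹ ^ s.length := by
  have hq : ((2 : ℝ) ^ k)⁻¹ ≤ 1 / 2 := by
    simpa using inv_anti₀ two_pos (le_self_pow₀ (one_le_two (α := ℝ)) hk)
  refine (dist_append_le_of_geometric (by positivity) (by positivity) (by linarith)
    hy.dist_append_singleton_le s u).trans ?_
  rw [div_le_iff₀ (by linarith), mul_comm]
  gcongr
  linarith

theorem IsRegularSet.ediam_range_le (hy : IsRegularSet k l y) (hk : k ≠ 0) :
    ediam (Set.range y) ≤ 2 := by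
  have hroot (s : List (Fin l)) : edist (y s) (y []) ≤ 1 := by
    simpa [edist_dist, dist_comm] using hy.dist_append_le hk [] s
  refine Metric.ediam_le ?_
  rintro _ ⟨s, rfl⟩ _ ⟨t, rfl⟩
  calc edist (y s) (y t) ≤ edist (y s) (y []) + edist (y t) (y []) := edist_triangle_right ..
    _ ≤ 1 + 1 := add_le_add (hroot s) (hroot t)
    _ = 2 := one_add_one_eq_two

theorem IsStronglyRegularSet.apply_append_replicate_zero [NeZero l]
    (hy : IsStronglyRegularSet k l y) (s : List (Fin l)) (n : ℕ) :
    y (s ++ List.replicate n 0) = y s := by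
  induction n with
  | zero => simp
  | succ n ih =>
    rw [List.replicate_succ', ← List.append_assoc, hy.2 _ 0 (Fin.val_zero l), ih]

theorem IsStronglyRegularSet.exists_length_eq_dist_le [NeZero l]
    (hy : IsStronglyRegularSet k l y) (hk : k ≠ 0) (s : List (Fin l)) (N : ℕ) :
    ∃ t : List (Fin l), t.length = N ∧ dist (y t) (y s) ≤ ((2 : ℝ) ^ k)⁻¹ ^ N := by
  rcases le_total N s.length with h | h
  · have htake : (s.take N).length = N := List.length_take_of_le h
    refine ⟨s.take N, htake, ?_⟩
    simpa only [List.take_append_drop, htake] using hy.1.dist_append_le hk (s.take N) (s.drop N)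
  · refine ⟨s ++ List.replicate (N - s.length) 0, by simp [h], ?_⟩
    rw [hy.apply_append_replicate_zero, dist_self]
    positivity

theorem IsStronglyRegularSet.pow_le_of_isCoverBy [NeZero l] (hy : IsStronglyRegularSet k l y)
    (hk : k ≠ 0) {r R : ℝ} {N j n : ℕ} (hR : 2 * ((2 : ℝ) ^ k)⁻¹ ^ N ≤ R)
    (hr : r < 4 * ((2 : ℝ) ^ k)⁻¹ ^ (N + j)) (s : List (Fin l))
    (hn : IsCoverBy r (closedBall (y s) R ∩ Set.range y) n) : l ^ j ≤ n := by
  obtain ⟨t, ht, hts⟩ := hy.exists_length_eq_dist_le hk s N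
  have hmem (w : Fin j → Fin l) :
      y (t ++ List.ofFn w) ∈ closedBall (y s) R ∩ Set.range y := by
    have hdist : dist (y t) (y (t ++ List.ofFn w)) ≤ ((2 : ℝ) ^ k)⁻¹ ^ N :=
      ht ▸ hy.1.dist_append_le hk t (List.ofFn w)
    refine ⟨Metric.mem_closedBall.2 ?_, Set.mem_range_self _⟩
    linarith [dist_triangle_left (y (t ++ List.ofFn w)) (y s) (y t)]
  have hsep : Pairwise fun v w : Fin j → Fin l =>
      ENNReal.ofReal r < edist (y (t ++ List.ofFn v)) (y (t ++ List.ofFn w)) := by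
    intro v w hvw
    have hne : t ++ List.ofFn v ≠ t ++ List.ofFn w := by
      simpa [List.append_right_inj, List.ofFn_inj] using hvw
    have hle := hy.1.le_dist_of_length_eq (by simp) hne
    rw [List.length_append, List.length_ofFn, ht] at hle
    rw [edist_dist]
    exact ENNReal.ofReal_lt_ofReal_iff'.2 ⟨hr.trans_le hle, hle.trans_lt' (by positivity)⟩
  simpa using hn.card_le_of_pairwise_lt_edist hmem hsep

theorem IsStronglyRegularSet.pow_le_mul_of_isCoverBy [NeZero l] (hy : IsStronglyRegularSet k l y)
    (hk : k ≠ 0) {R : ℝ} (hR₀ : 0 < R) (hR₂ : R ≤ 2) (s : List (Fin l)) {j n : ℕ}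
    (hn : IsCoverBy (R / (2 ^ k) ^ j) (closedBall (y s) R ∩ Set.range y) n) :
    l ^ j ≤ l * n := by
  rcases j with _ | j
  · have hn₀ : 0 < n :=
      hn.pos ⟨y s, Metric.mem_closedBall_self hR₀.le, Set.mem_range_self s⟩
    exact Nat.mul_pos (NeZero.pos l) hn₀
  · obtain ⟨N, hN, hN'⟩ := exists_nat_pow_near_of_lt_one (half_pos hR₀)
      ((div_le_one two_pos).2 hR₂) (by positivity : 0 < ((2 : ℝ) ^ k)⁻¹)
      (inv_lt_one_of_one_lt₀ (one_lt_pow₀ _root_.one_lt_two hk))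
    rw [pow_succ']
    refine Nat.mul_le_mul_left l (hy.pow_le_of_isCoverBy hk (N := N + 1) (by linarith) ?_ s hn)
    calc R / (2 ^ k) ^ (j + 1)
        = R * ((2 : ℝ) ^ k)⁻¹ ^ (j + 1) := by rw [div_eq_mul_inv, inv_pow]
      _ < 4 * ((2 : ℝ) ^ k)⁻¹ ^ N * ((2 : ℝ) ^ k)⁻¹ ^ (j + 1) := by
        gcongr
        linarith
      _ = 4 * ((2 : ℝ) ^ k)⁻¹ ^ (N + 1 + j) := by ring

theorem IsStronglyRegularSet.ofReal_logb_le_lowerDim_range [NeZero l]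
    (hy : IsStronglyRegularSet k l y) (hk : k ≠ 0) :
    ENNReal.ofReal (Real.logb (2 ^ k) l) ≤ lowerDim (Set.range y) := by
  refine ofReal_logb_le_lowerDim (one_lt_pow₀ _root_.one_lt_two hk)
    (Nat.one_le_cast.2 NeZero.one_le) (Nat.cast_pos.2 (NeZero.pos l)) ?_
  rintro R hR₀ hR _ ⟨s, rfl⟩ j n hn
  have hR₂ : R ≤ 2 := by
    simpa using hR.trans (hy.1.ediam_range_le hk)
  exact_mod_cast hy.pow_le_mul_of_isCoverBy hk hR₀ hR₂ s hn

end RegularSets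

/-- If `{y_s}` is a strongly `(k,l)`-regular set in a metric space `X` (`k, l ≥ 2`), then
`Y = {y_s : s ∈ l^{<ω}}` satisfies `dim_L Y ≥ log l / (k log 2)`; in particular
`dim_ML X ≥ log l / (k log 2)`. -/
theorem stmt4 {X : Type*} [MetricSpace X] (k l : ℕ) (hk : 2 ≤ k) (hl : 2 ≤ l)
    (y : List (Fin l) → X) (hy : IsStronglyRegularSet k l y) :
    ENNReal.ofReal (Real.log l / (k * Real.log 2)) ≤ lowerDim (Set.range y) ∧
    ENNReal.ofReal (Real.log l / (k * Real.log 2)) ≤ modLowerDim (Set.univ : Set X) := by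
  have : NeZero l := ⟨by lia⟩
  have hY : ENNReal.ofReal (Real.log l / (k * Real.log 2)) ≤ lowerDim (Set.range y) := by
    rw [← Real.log_pow, Real.log_div_log]
    exact hy.ofReal_logb_le_lowerDim_range (by lia)
  exact ⟨hY, hY.trans (lowerDim_le_modLowerDim (Set.subset_univ _))⟩
end

section
/- Let (X,ρ) be a metric space and let k, l ≥ 2 be integers. Then the family F(k,l) = {K ∈ 𝒦(X) : K contains a (k,l)-regular set} is a closed subset of the hyperspace 𝒦(X) of non-empty compact subsets of X endowed with the Hausdorff metric. -/
open Metric ENNReal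

variable {X : Type*} [MetricSpace X]

/-!
The Hausdorff metric induces the Vietoris topology. If compact sets `Kₙ` tend to a compact set `K`
in this topology, then any points `yₙ ∈ Kₙ` accumulate on `K`, since `Kₙ` eventually lies in each
neighbourhood of `K`. Along an ultrafilter tending to `K`, all members of a family of points chosen
in `Kₙ` therefore converge at once to points of `K`, and the limit family satisfies every closed
condition satisfied by the chosen families. Being `(k, l)`-regular is a closed condition, since it
consists of non-strict inequalities between distances.
-/

open Filter Topology TopologicalSpace

section Selections

variable {Y ι : Type*} [TopologicalSpace Y]

theorem ultrafilter_le_nhdsSet_iff_of_isCompact {K : Set Y} (hK : IsCompact K)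
    {U : Ultrafilter Y} : ↑U ≤ 𝓝ˢ K ↔ ∃ x ∈ K, ↑U ≤ 𝓝 x := by
  rw [← not_iff_not, ← Ultrafilter.disjoint_iff_not_le, disjoint_comm,
    hK.disjoint_nhdsSet_left]
  simp only [disjoint_comm, Ultrafilter.disjoint_iff_not_le, not_exists, not_and]

theorem tendsto_nhdsSet_of_eventually_mem_compacts {f : Filter ι} {F : ι → Compacts Y}
    {K : Compacts Y} (hF : Tendsto F f (𝓝 K)) {y : ι → Y} (hy : ∀ᶠ i in f, y i ∈ F i) :
    Tendsto y f (𝓝ˢ (K : Set Y)) := by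
  refine (hasBasis_nhdsSet (K : Set Y)).tendsto_right_iff.2 fun V ⟨hV, hKV⟩ ↦ ?_
  have hFV : ∀ᶠ i in f, (F i : Set Y) ⊆ V :=
    hF.eventually ((Compacts.isOpen_subsets_of_isOpen hV).mem_nhds hKV)
  filter_upwards [hy, hFV] with i hyi hFi using hFi hyi

theorem exists_tendsto_of_eventually_mem_compacts {κ : Type*} {U : Ultrafilter κ}
    {F : κ → Compacts Y} {K : Compacts Y} (hF : Tendsto F U (𝓝 K)) {y : κ → ι → Y}
    (hy : ∀ᶠ j in U, ∀ i, y j i ∈ F j) :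
    ∃ x : ι → Y, (∀ i, x i ∈ K) ∧ Tendsto y U (𝓝 x) := by
  have hlim (i : ι) : ∃ x ∈ (K : Set Y), Tendsto (fun j ↦ y j i) U (𝓝 x) :=
    (ultrafilter_le_nhdsSet_iff_of_isCompact K.isCompact (U := U.map fun j ↦ y j i)).1
      (tendsto_nhdsSet_of_eventually_mem_compacts hF (hy.mono fun _ h ↦ h i))
  choose x hxK hx using hlim
  exact ⟨x, hxK, tendsto_pi_nhds.2 hx⟩

theorem stmt9_general {C : Set (ι → Y)} (hC : IsClosed C) :
    IsClosed {K : Compacts Y | ∃ y : ι → Y, (∀ i, y i ∈ K) ∧ y ∈ C} := by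
  refine isClosed_iff_ultrafilter.2 fun K U hUK hU ↦ ?_
  obtain ⟨y, hy⟩ : ∃ y : Compacts Y → ι → Y, ∀ᶠ L in (U : Filter (Compacts Y)),
      (∀ i, y L i ∈ L) ∧ y L ∈ C := Eventually.choice hU
  obtain ⟨x, hxK, hx⟩ :=
    exists_tendsto_of_eventually_mem_compacts (F := id) hUK (hy.mono fun _ h ↦ h.1)
  exact ⟨x, hxK, hC.mem_of_tendsto hx (hy.mono fun _ h ↦ h.2)⟩

end Selections

theorem isClosed_setOf_isRegularSet (k l : ℕ) :
    IsClosed {y : List (Fin l) → X | IsRegularSet k l y} := by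
  simp only [IsRegularSet, Set.ofPred_and, Set.ofPred_forall]
  refine .inter (isClosed_iInter fun s ↦ isClosed_iInter fun c ↦ ?_)
    (isClosed_iInter fun s ↦ isClosed_iInter fun t ↦ isClosed_iInter fun _ ↦
      isClosed_iInter fun _ ↦ ?_)
  · exact isClosed_le (by fun_prop) continuous_const
  · exact isClosed_le continuous_const (by fun_prop)

/-- For integers `k, l ≥ 2`, the family of non-empty compact subsets of `X` containing a
`(k,l)`-regular set is closed in the hyperspace `𝒦(X)` with the Hausdorff metric. -/
theorem stmt9 {X : Type*} [MetricSpace X] (k l : ℕ) (hk : 2 ≤ k) (hl : 2 ≤ l) :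
    IsClosed {K : TopologicalSpace.NonemptyCompacts X |
      ∃ y : List (Fin l) → X, (∀ s, y s ∈ (K : Set X)) ∧ IsRegularSet k l y} :=
  (stmt9_general (isClosed_setOf_isRegularSet k l)).preimage
    NonemptyCompacts.continuous_toCompacts
end
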